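/- arXiv:2505.03429 — 9 statements merged into one kernel-verified Lean document; each statement's English description precedes it below -/
import Mathlib

section
/- Let U ⊆ ℂ be open and let A : U → Mat₂(ℂ) be a twice differentiable matrix-valued function with tr A(x) = 0 and A₁₂(x) ≠ 0 for all x ∈ U, and let h : U → ℂ be a twice differentiable function with h(x)² = A₁₂(x) and h(x) ≠ 0 on U. Define g(x) = [[h(x), 0],[0, h(x)⁻¹]] · [[1, 0],[A₁₂′(x)/(2A₁₂(x)) − A₁₁(x), 1]]. Then g(x) is invertible for every x ∈ U and g(x)⁻¹·(A(x)·g(x) − g′(x)) = [[0, 1],[Q(x), 0]], where Q(x) = −det A(x) + A₁₁′(x) − A₁₁(x)·A₁₂′(x)/A₁₂(x) + (3/4)·(A₁₂′(x)/A₁₂(x))² − A₁₂″(x)/(2A₁₂(x)). -/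
/-!
The gauge transformation is a product of two. Gauging by `diag(h, h⁻¹)` with `h² = A₁₂`
normalizes the upper right entry to `1`, at the price of shifting the diagonal by
`∓ h' / h = ∓ A₁₂' / (2 A₁₂)`. For a system `B` with `B₁₂ = 1`, the lower unipotent gauge with
lower left entry `-B₁₁` then gives companion form with lower left entry `B₁₁' - det B`.
-/

open Filter Topology

section Gauge

variable {l m n 𝕜 : Type*} [NontriviallyNormedField 𝕜]

/-- The entrywise derivative `g'` of a matrix-valued function `g`, with value `0` at the entries
that are not differentiable. -/
noncomputable def entrywiseDeriv (g : 𝕜 → Matrix m n 𝕜) (x : 𝕜) : Matrix m n 𝕜 :=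
  Matrix.of fun i j => deriv (fun y => g y i j) x

theorem entrywiseDeriv_mul [Fintype m] {g : 𝕜 → Matrix l m 𝕜} {k : 𝕜 → Matrix m n 𝕜} {x : 𝕜}
    (hg : ∀ i j, DifferentiableAt 𝕜 (fun y => g y i j) x)
    (hk : ∀ i j, DifferentiableAt 𝕜 (fun y => k y i j) x) :
    entrywiseDeriv (fun y => g y * k y) x =
      entrywiseDeriv g x * k x + g x * entrywiseDeriv k x := by
  ext i j
  simp only [entrywiseDeriv, Matrix.of_apply, Matrix.add_apply, Matrix.mul_apply]
  rw [deriv_fun_sum fun a _ => (hg i a).fun_mul (hk a j), ← Finset.sum_add_distrib]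
  exact Finset.sum_congr rfl fun a _ => deriv_fun_mul (hg i a) (hk a j)

variable [Fintype n] [DecidableEq n]

/-- The coefficient matrix `g⁻¹ (A g - g')` of the system that `Ψ' = A Ψ` becomes under the
substitution `Ψ = g Φ`. -/
noncomputable def gaugeTransform (A g : 𝕜 → Matrix n n 𝕜) (x : 𝕜) : Matrix n n 𝕜 :=
  (g x)⁻¹ * (A x * g x - entrywiseDeriv g x)

theorem gaugeTransform_mul (A : 𝕜 → Matrix n n 𝕜) {g k : 𝕜 → Matrix n n 𝕜} {x : 𝕜}
    (hgx : IsUnit (g x))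
    (hg : ∀ i j, DifferentiableAt 𝕜 (fun y => g y i j) x)
    (hk : ∀ i j, DifferentiableAt 𝕜 (fun y => k y i j) x) :
    gaugeTransform A (fun y => g y * k y) x = gaugeTransform (gaugeTransform A g) k x := by
  have inv_mul_self : (g x)⁻¹ * g x = 1 :=
    Matrix.nonsing_inv_mul _ ((Matrix.isUnit_iff_isUnit_det _).1 hgx)
  calc gaugeTransform A (fun y => g y * k y) x
      = (k x)⁻¹ * ((g x)⁻¹ * (A x * g x - entrywiseDeriv g x) * k x -
          (g x)⁻¹ * g x * entrywiseDeriv k x) := by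
        rw [gaugeTransform, entrywiseDeriv_mul hg hk, Matrix.mul_inv_rev]
        noncomm_ring
    _ = gaugeTransform (gaugeTransform A g) k x := by
        rw [inv_mul_self, one_mul, gaugeTransform, gaugeTransform]

end Gauge

section FinTwo

variable {𝕜 : Type*} [NontriviallyNormedField 𝕜]
variable {A : 𝕜 → Matrix (Fin 2) (Fin 2) 𝕜} {h p : 𝕜 → 𝕜} {x : 𝕜}

theorem det_diag_inv {K : Type*} [Field K] {c : K} (hc : c ≠ 0) : !![c, 0; 0, c⁻¹].det = 1 := by
  simp [Matrix.det_fin_two_of, hc]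

theorem differentiableAt_diag_inv (hh : DifferentiableAt 𝕜 h x) (hx : h x ≠ 0) (i j : Fin 2) :
    DifferentiableAt 𝕜 (fun y => !![h y, 0; 0, (h y)⁻¹] i j) x := by
  fin_cases i <;> fin_cases j <;> simp [hh, hh.fun_inv hx]

theorem differentiableAt_lowerUnipotent (hp : DifferentiableAt 𝕜 p x) (i j : Fin 2) :
    DifferentiableAt 𝕜 (fun y => !![1, 0; p y, 1] i j) x := by
  fin_cases i <;> fin_cases j <;> simp [hp]

theorem gaugeTransform_diag_inv (A : 𝕜 → Matrix (Fin 2) (Fin 2) 𝕜)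
    (hh : DifferentiableAt 𝕜 h x) (hx : h x ≠ 0) :
    gaugeTransform A (fun y => !![h y, 0; 0, (h y)⁻¹]) x =
      !![A x 0 0 - logDeriv h x, A x 0 1 / h x ^ 2;
         A x 1 0 * h x ^ 2, A x 1 1 + logDeriv h x] := by
  have deriv_diag : entrywiseDeriv (fun y => !![h y, 0; 0, (h y)⁻¹]) x =
      !![deriv h x, 0; 0, -deriv h x / h x ^ 2] := by
    ext i j
    fin_cases i <;> fin_cases j <;> simp [entrywiseDeriv, deriv_fun_inv'' hh hx]
  have inv_diag : !![h x, 0; 0, (h x)⁻¹]⁻¹ = !![(h x)⁻¹, 0; 0, h x] := by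
    rw [Matrix.inv_def, det_diag_inv hx, Matrix.adjugate_fin_two_of]
    simp
  rw [gaugeTransform, deriv_diag, inv_diag, logDeriv_apply]
  ext i j
  fin_cases i <;> fin_cases j <;> simp [Matrix.mul_apply, Fin.sum_univ_two] <;> field_simp
  ring

theorem gaugeTransform_lowerUnipotent (h01 : A x 0 1 = 1) (hp : p x = -A x 0 0) :
    gaugeTransform A (fun y => !![1, 0; p y, 1]) x =
      !![0, 1; -(A x).det - deriv p x, (A x).trace] := by
  have deriv_unipotent : entrywiseDeriv (fun y => !![1, 0; p y, 1]) x = !![0, 0; deriv p x, 0] := by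
    ext i j
    fin_cases i <;> fin_cases j <;> simp [entrywiseDeriv]
  have inv_unipotent : !![1, 0; p x, 1]⁻¹ = !![1, 0; -p x, 1] := by
    rw [Matrix.inv_def, Matrix.det_fin_two_of, Matrix.adjugate_fin_two_of]
    simp
  rw [gaugeTransform, deriv_unipotent, inv_unipotent, Matrix.det_fin_two, Matrix.trace_fin_two]
  ext i j
  fin_cases i <;> fin_cases j <;> simp [Matrix.mul_apply, Fin.sum_univ_two, h01, hp]
  ring

end FinTwo

section Scalar

variable {𝕜 : Type*} [NontriviallyNormedField 𝕜] {f h : 𝕜 → 𝕜} {x : 𝕜}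

theorem deriv_logDeriv (hf : DifferentiableAt 𝕜 f x) (hf' : DifferentiableAt 𝕜 (deriv f) x)
    (hx : f x ≠ 0) :
    deriv (logDeriv f) x = deriv (deriv f) x / f x - logDeriv f x ^ 2 := by
  rw [logDeriv, deriv_div hf' hf hx, Pi.div_apply]
  field_simp

variable [NeZero (2 : 𝕜)]

theorem differentiableAt_of_sq_eq (hh : ContinuousAt h x) (hx : h x ≠ 0)
    (hsq : ∀ᶠ y in 𝓝 x, h y ^ 2 = f y) (hf : DifferentiableAt 𝕜 f x) :
    DifferentiableAt 𝕜 h x := by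
  have add_self_ne_zero : h x + h x ≠ 0 := by
    rw [← two_mul]
    exact mul_ne_zero two_ne_zero hx
  have tendsto_add : Tendsto (fun y => h y + h x) (𝓝 x) (𝓝 (h x + h x)) := hh.add_const (h x)
  have slope_eq : (fun y => slope f x y / (h y + h x)) =ᶠ[𝓝[≠] x] slope h x := by
    filter_upwards [nhdsWithin_le_nhds hsq,
      nhdsWithin_le_nhds (tendsto_add.eventually_ne add_self_ne_zero)] with y hy hne
    rw [slope_def_field, slope_def_field, ← hy, ← hsq.self_of_nhds, sq_sub_sq]
    field_simp
  exact (hasDerivAt_iff_tendsto_slope.2 <| (hf.hasDerivAt.tendsto_slope.div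
    (tendsto_add.mono_left nhdsWithin_le_nhds) add_self_ne_zero).congr' slope_eq).differentiableAt

theorem logDeriv_eq_half_of_sq_eq (hh : DifferentiableAt 𝕜 h x)
    (hsq : ∀ᶠ y in 𝓝 x, h y ^ 2 = f y) :
    logDeriv h x = logDeriv f x / 2 := by
  have logDeriv_sq : logDeriv f x = 2 * logDeriv h x := by
    rw [← (logDeriv_congr_nhds hsq).self_of_nhds, logDeriv_fun_pow hh 2, Nat.cast_ofNat]
  rw [logDeriv_sq, mul_div_cancel_left₀ _ two_ne_zero]

end Scalar

section Oper

variable {𝕜 : Type*} [NontriviallyNormedField 𝕜]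

/-- The lower left entry of the unipotent factor of `operGauge`. It is minus the upper left entry
of the system `A` after the factor `diag(h, h⁻¹)` has been applied. -/
noncomputable def operShear (A : 𝕜 → Matrix (Fin 2) (Fin 2) 𝕜) (x : 𝕜) : 𝕜 :=
  deriv (fun y => A y 0 1) x / (2 * A x 0 1) - A x 0 0

/-- The singular gauge `g` to companion form; `h` is meant to be a square root of `A₁₂`. -/
noncomputable def operGauge (A : 𝕜 → Matrix (Fin 2) (Fin 2) 𝕜) (h : 𝕜 → 𝕜) (x : 𝕜) :
    Matrix (Fin 2) (Fin 2) 𝕜 :=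
  !![h x, 0; 0, (h x)⁻¹] * !![1, 0; operShear A x, 1]

/-- The coefficient `Q` of the scalar equation `y'' = (tr A) y' + Q y` to which `operGauge`
reduces `Ψ' = A Ψ`. -/
noncomputable def operPotential (A : 𝕜 → Matrix (Fin 2) (Fin 2) 𝕜) (x : 𝕜) : 𝕜 :=
  -(A x).det + deriv (fun y => A y 0 0) x
    - A x 0 0 * deriv (fun y => A y 0 1) x / A x 0 1
    + (A x).trace * deriv (fun y => A y 0 1) x / (2 * A x 0 1)
    + (3 / 4) * (deriv (fun y => A y 0 1) x / A x 0 1) ^ 2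
    - deriv (deriv (fun y => A y 0 1)) x / (2 * A x 0 1)

variable {A : 𝕜 → Matrix (Fin 2) (Fin 2) 𝕜} {h : 𝕜 → 𝕜} {x : 𝕜}

theorem det_operGauge (A : 𝕜 → Matrix (Fin 2) (Fin 2) 𝕜) (hx : h x ≠ 0) :
    (operGauge A h x).det = 1 := by
  rw [operGauge, Matrix.det_mul, det_diag_inv hx, Matrix.det_fin_two_of]
  simp

theorem hasDerivAt_operShear (h00 : DifferentiableAt 𝕜 (fun y => A y 0 0) x)
    (h01 : DifferentiableAt 𝕜 (fun y => A y 0 1) x)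
    (h01' : DifferentiableAt 𝕜 (deriv fun y => A y 0 1) x) (hx : A x 0 1 ≠ 0) :
    HasDerivAt (operShear A)
      (deriv (deriv fun y => A y 0 1) x / (2 * A x 0 1)
        - (deriv (fun y => A y 0 1) x / A x 0 1) ^ 2 / 2 - deriv (fun y => A y 0 0) x) x := by
  have operShear_eq : operShear A = fun y => logDeriv (fun z => A z 0 1) y / 2 - A y 0 0 := by
    funext y
    rw [operShear, logDeriv_apply, div_div, mul_comm]
  have hasDerivAt_logDeriv : HasDerivAt (logDeriv fun y => A y 0 1)
      (deriv (logDeriv fun y => A y 0 1) x) x :=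
    (h01'.div h01 hx).hasDerivAt
  rw [operShear_eq]
  refine ((hasDerivAt_logDeriv.div_const 2).fun_sub h00.hasDerivAt).congr_deriv ?_
  rw [deriv_logDeriv h01 h01' hx, logDeriv_apply]
  field_simp

variable [NeZero (2 : 𝕜)]

theorem gaugeTransform_diag_inv_of_sq_eq (hh : DifferentiableAt 𝕜 h x)
    (hsq : ∀ᶠ y in 𝓝 x, h y ^ 2 = A y 0 1) (hx : h x ≠ 0) :
    gaugeTransform A (fun y => !![h y, 0; 0, (h y)⁻¹]) x =
      !![-operShear A x, 1; A x 1 0 * A x 0 1, (A x).trace + operShear A x] := by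
  have hsq_x : h x ^ 2 = A x 0 1 := hsq.self_of_nhds
  have h01_ne : A x 0 1 ≠ 0 := hsq_x ▸ pow_ne_zero 2 hx
  have logDeriv_eq : logDeriv h x = operShear A x + A x 0 0 := by
    rw [logDeriv_eq_half_of_sq_eq hh hsq, logDeriv_apply, operShear, div_div, mul_comm,
      sub_add_cancel]
  rw [gaugeTransform_diag_inv A hh hx, hsq_x, div_self h01_ne, logDeriv_eq, Matrix.trace_fin_two]
  congr! 3 <;> ring_nf

theorem operPotential_eq_sub_deriv_operShear (h00 : DifferentiableAt 𝕜 (fun y => A y 0 0) x)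
    (h01 : DifferentiableAt 𝕜 (fun y => A y 0 1) x)
    (h01' : DifferentiableAt 𝕜 (deriv fun y => A y 0 1) x) (hx : A x 0 1 ≠ 0) :
    operPotential A x =
      operShear A x * ((A x).trace + operShear A x) + A x 1 0 * A x 0 1
        - deriv (operShear A) x := by
  have four_ne_zero : (4 : 𝕜) ≠ 0 := by
    rw [← two_add_two_eq_four, ← two_mul]
    exact mul_ne_zero two_ne_zero two_ne_zero
  rw [(hasDerivAt_operShear h00 h01 h01' hx).deriv, operPotential, operShear,
    Matrix.det_fin_two, Matrix.trace_fin_two]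
  field_simp
  ring

theorem gaugeTransform_operGauge (h00 : DifferentiableAt 𝕜 (fun y => A y 0 0) x)
    (h01 : DifferentiableAt 𝕜 (fun y => A y 0 1) x)
    (h01' : DifferentiableAt 𝕜 (deriv fun y => A y 0 1) x)
    (hh : ContinuousAt h x) (hsq : ∀ᶠ y in 𝓝 x, h y ^ 2 = A y 0 1) (hx : h x ≠ 0) :
    gaugeTransform A (operGauge A h) x = !![0, 1; operPotential A x, (A x).trace] := by
  have h01_ne : A x 0 1 ≠ 0 := hsq.self_of_nhds ▸ pow_ne_zero 2 hx
  have hh' : DifferentiableAt 𝕜 h x := differentiableAt_of_sq_eq hh hx hsq h01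
  have shear_differentiable : DifferentiableAt 𝕜 (operShear A) x :=
    (hasDerivAt_operShear h00 h01 h01' h01_ne).differentiableAt
  have diag_isUnit : IsUnit !![h x, 0; 0, (h x)⁻¹] :=
    (Matrix.isUnit_iff_isUnit_det _).2 (det_diag_inv hx ▸ isUnit_one)
  have diag_gauge := gaugeTransform_diag_inv_of_sq_eq hh' hsq hx
  calc gaugeTransform A (operGauge A h) x
      = gaugeTransform (gaugeTransform A fun y => !![h y, 0; 0, (h y)⁻¹])
          (fun y => !![1, 0; operShear A y, 1]) x :=
        gaugeTransform_mul A diag_isUnit (differentiableAt_diag_inv hh' hx)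
          (differentiableAt_lowerUnipotent shear_differentiable)
    _ = !![0, 1; operPotential A x, (A x).trace] := by
        rw [gaugeTransform_lowerUnipotent (by simp [diag_gauge]) (by simp [diag_gauge]),
          diag_gauge, Matrix.det_fin_two_of, Matrix.trace_fin_two_of,
          operPotential_eq_sub_deriv_operShear h00 h01 h01' h01_ne]
        congr! 5 <;> ring

theorem stmt0_general (h00 : DifferentiableAt 𝕜 (fun y => A y 0 0) x)
    (h01 : DifferentiableAt 𝕜 (fun y => A y 0 1) x)
    (h01' : DifferentiableAt 𝕜 (deriv fun y => A y 0 1) x)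
    (hh : ContinuousAt h x) (hsq : ∀ᶠ y in 𝓝 x, h y ^ 2 = A y 0 1) (hx : h x ≠ 0) :
    IsUnit (operGauge A h x) ∧
      gaugeTransform A (operGauge A h) x = !![0, 1; operPotential A x, (A x).trace] :=
  ⟨(Matrix.isUnit_iff_isUnit_det _).2 (det_operGauge A hx ▸ isUnit_one),
    gaugeTransform_operGauge h00 h01 h01' hh hsq hx⟩

end Oper

/- Singular gauge transformation bringing a trace-free 2×2 first-order system
   d/dx − A(x) into oper (companion) form d/dx − [[0,1],[Q(x),0]]. -/
theorem stmt0
    (U : Set ℂ) (hU : IsOpen U)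
    (A : ℂ → Matrix (Fin 2) (Fin 2) ℂ)
    (hA1 : ∀ i j : Fin 2, ∀ x ∈ U, DifferentiableAt ℂ (fun y => A y i j) x)
    (hA2 : ∀ i j : Fin 2, ∀ x ∈ U, DifferentiableAt ℂ (deriv (fun y => A y i j)) x)
    (htr : ∀ x ∈ U, (A x).trace = 0)
    (h12 : ∀ x ∈ U, A x 0 1 ≠ 0)
    (h : ℂ → ℂ)
    (hh1 : ∀ x ∈ U, DifferentiableAt ℂ h x)
    (hh2 : ∀ x ∈ U, DifferentiableAt ℂ (deriv h) x)
    (hsq : ∀ x ∈ U, (h x) ^ 2 = A x 0 1)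
    (hne : ∀ x ∈ U, h x ≠ 0)
    (g : ℂ → Matrix (Fin 2) (Fin 2) ℂ)
    (hg : ∀ x, g x =
      !![h x, 0; 0, (h x)⁻¹] *
        !![1, 0; deriv (fun y => A y 0 1) x / (2 * A x 0 1) - A x 0 0, 1])
    (Q : ℂ → ℂ)
    (hQ : ∀ x, Q x =
      -(A x).det + deriv (fun y => A y 0 0) x
        - A x 0 0 * deriv (fun y => A y 0 1) x / A x 0 1
        + (3 / 4) * (deriv (fun y => A y 0 1) x / A x 0 1) ^ 2
        - deriv (deriv (fun y => A y 0 1)) x / (2 * A x 0 1)) :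
    ∀ x ∈ U, IsUnit (g x) ∧
      (g x)⁻¹ * (A x * g x - Matrix.of (fun i j => deriv (fun y => g y i j) x))
        = !![0, 1; Q x, 0] := by
  intro x hx
  obtain rfl : g = operGauge A h := funext hg
  simpa [gaugeTransform, entrywiseDeriv, operPotential, htr x hx, hQ x] using
    stmt0_general (hA1 0 0 x hx) (hA1 0 1 x hx) (hA2 0 1 x hx) (hh1 x hx).continuousAt
      (eventually_of_mem (hU.mem_nhds hx) hsq) (hne x hx)
end

section
/- Fix ε ∈ ℂ∖{0}, let U ⊆ ℂ∖{0} be open, and let q, p, r : U → ℂ be differentiable with q(t) ≠ 0 for all t ∈ U. For x ∈ ℂ∖{0} and t ∈ U define the 2×2 matrices A_ε(x,t) = (1/x)·[[r + pq/ε, (1 − q/x)/ε],[(tx − 1/q)/ε, −r − pq/ε]] and B_ε(x,t) = (1/(εt))·[[pq + εr, 1],[0, −(pq + εr)]] + (x/ε)·[[0,0],[1,0]]. Then for t₀ ∈ U the zero-curvature equation ∂_t A_ε(x,t)|_{t=t₀} − ∂_x B_ε(x,t)|_{x,t₀} + [A_ε(x,t₀), B_ε(x,t₀)] = 0 holds for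 all x ∈ ℂ∖{0} if and only if t₀·q′(t₀) = 2p(t₀)q(t₀)²/ε + 2q(t₀)r(t₀) and t₀·(pq + εr)′(t₀) = (q(t₀)t₀ − q(t₀)⁻¹)/ε. -/
/-!
Both matrices depend on `p` and `r` only through `s = p q + ε r = q (p + ε r / q)`, the product of
`q` and the shifted momentum. In terms of `q` and `s` the curvature collapses to
`1 / (ε x t) • !![E₂, -E₁ / x; E₁ / q², -E₂]`, where
`E₁ = t q' - 2 q s / ε` and `E₂ = t s' - (q t - q⁻¹) / ε`.
So the curvature vanishes at one `x ≠ 0`, equivalently at all of them, iff `E₁ = E₂ = 0`.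
-/

/-- The curvature `∂ₜA - ∂ₓB + [A, B]` of the linear systems `∂ₓY = A Y`, `∂ₜY = B Y`, the arguments
of `A` and `B` being `x` and `t` in this order. The derivatives are taken entrywise, which requires
no choice of a norm on matrices. -/
noncomputable def curvature {𝕜 n : Type*} [NontriviallyNormedField 𝕜] [Fintype n]
    (A B : 𝕜 → 𝕜 → Matrix n n 𝕜) (x t : 𝕜) : Matrix n n 𝕜 :=
  Matrix.of (fun i j => deriv (fun τ => A x τ i j) t)
    - Matrix.of (fun i j => deriv (fun y => B y t i j) x)
    + (A x t * B x t - B x t * A x t)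

namespace PainleveIII3

variable {𝕜 : Type*} [NontriviallyNormedField 𝕜] {ε t x q' s' : 𝕜} {q s : 𝕜 → 𝕜}

/-- The connection matrix `A_ε` of the Painlevé III₃ pencil, in terms of `q` and
`s = p q + ε r`. -/
noncomputable def connectionMatrix (ε : 𝕜) (q s : 𝕜 → 𝕜) (x t : 𝕜) : Matrix (Fin 2) (Fin 2) 𝕜 :=
  (1 / x) • !![s t / ε, (1 - q t / x) / ε; (t * x - 1 / q t) / ε, -(s t / ε)]

/-- The matrix `B_ε` of the deformation equation `∂ₜY = B_ε Y` of the Painlevé III₃ pencil, in terms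
of `s = p q + ε r`. -/
noncomputable def deformationMatrix (ε : 𝕜) (s : 𝕜 → 𝕜) (x t : 𝕜) : Matrix (Fin 2) (Fin 2) 𝕜 :=
  (1 / (ε * t)) • !![s t, 1; 0, -s t] + (x / ε) • !![0, 0; 1, 0]

theorem deriv_connectionMatrix (hq : HasDerivAt q q' t) (hs : HasDerivAt s s' t)
    (hqt : q t ≠ 0) :
    Matrix.of (fun i j => deriv (fun τ => connectionMatrix ε q s x τ i j) t) =
      (1 / x) • !![s' / ε, -(q' / x) / ε; (x + q' / q t ^ 2) / ε, -(s' / ε)] := by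
  have diagonal : deriv (fun τ => s τ / ε) t = s' / ε := (hs.div_const ε).deriv
  have upper_right : deriv (fun τ => (1 - q τ / x) / ε) t = -(q' / x) / ε :=
    (((hq.div_const x).const_sub 1).div_const ε).deriv
  have lower_left : deriv (fun τ => (τ * x - (q τ)⁻¹) / ε) t = (x + q' / q t ^ 2) / ε := by
    refine ((((hasDerivAt_mul_const x).fun_sub (hq.fun_inv hqt)).div_const ε).deriv).trans ?_
    ring
  ext i j
  fin_cases i <;> fin_cases j <;>
    simp [connectionMatrix, diagonal, upper_right, lower_left]

theorem deriv_deformationMatrix :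
    Matrix.of (fun i j => deriv (fun y => deformationMatrix ε s y t i j) x) =
      (1 / ε) • !![0, 0; 1, 0] := by
  ext i j
  fin_cases i <;> fin_cases j <;> simp [deformationMatrix]

theorem commutator_connectionMatrix_deformationMatrix (hε : ε ≠ 0) (ht : t ≠ 0) (hx : x ≠ 0)
    (hqt : q t ≠ 0) :
    connectionMatrix ε q s x t * deformationMatrix ε s x t
        - deformationMatrix ε s x t * connectionMatrix ε q s x t =
      (1 / (ε ^ 2 * x * t)) • !![(q t)⁻¹ - q t * t, 2 * q t * s t / x;
        -(2 * s t / q t), q t * t - (q t)⁻¹] := by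
  simp only [connectionMatrix, deformationMatrix, ← Matrix.ext_iff, Fin.forall_fin_two,
    Matrix.mul_apply, Fin.sum_univ_two, Matrix.add_apply, Matrix.sub_apply, Matrix.smul_apply,
    Matrix.of_apply, Matrix.cons_val_zero, Matrix.cons_val_one, Matrix.cons_val',
    Matrix.cons_val_fin_one, smul_eq_mul]
  refine ⟨⟨?_, ?_⟩, ?_, ?_⟩ <;> field_simp <;> ring

theorem curvature_eq (hε : ε ≠ 0) (ht : t ≠ 0) (hx : x ≠ 0) (hq : HasDerivAt q q' t)
    (hs : HasDerivAt s s' t) (hqt : q t ≠ 0) :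
    curvature (connectionMatrix ε q s) (deformationMatrix ε s) x t =
      (1 / (ε * x * t)) •
        !![t * s' - (q t * t - (q t)⁻¹) / ε, -((t * q' - 2 * q t * s t / ε) / x);
          (t * q' - 2 * q t * s t / ε) / q t ^ 2, -(t * s' - (q t * t - (q t)⁻¹) / ε)] := by
  rw [curvature, deriv_connectionMatrix hq hs hqt, deriv_deformationMatrix,
    commutator_connectionMatrix_deformationMatrix hε ht hx hqt]
  simp only [← Matrix.ext_iff, Fin.forall_fin_two, Matrix.add_apply, Matrix.sub_apply,
    Matrix.smul_apply, Matrix.of_apply, Matrix.cons_val_zero, Matrix.cons_val_one, Matrix.cons_val',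
    Matrix.cons_val_fin_one, smul_eq_mul]
  refine ⟨⟨?_, ?_⟩, ?_, ?_⟩ <;> field_simp <;> ring

theorem curvature_eq_zero_iff (hε : ε ≠ 0) (ht : t ≠ 0) (hx : x ≠ 0)
    (hq : HasDerivAt q q' t) (hs : HasDerivAt s s' t) (hqt : q t ≠ 0) :
    curvature (connectionMatrix ε q s) (deformationMatrix ε s) x t = 0 ↔
      t * q' = 2 * q t * s t / ε ∧ t * s' = (q t * t - (q t)⁻¹) / ε := by
  have scalar_ne_zero : 1 / (ε * x * t) ≠ 0 := one_div_ne_zero (mul_ne_zero (mul_ne_zero hε hx) ht)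
  rw [curvature_eq hε ht hx hq hs hqt, smul_eq_zero_iff_right scalar_ne_zero,
    ← sub_eq_zero (a := t * q'), ← sub_eq_zero (a := t * s')]
  constructor
  · intro h
    have diagonal := congr_fun₂ h 0 0
    have upper_right := congr_fun₂ h 0 1
    exact ⟨by simpa [hx] using upper_right, diagonal⟩
  · rintro ⟨q_equation, s_equation⟩
    rw [q_equation, s_equation, zero_div, zero_div, neg_zero]
    exact (Matrix.eta_fin_two 0).symm

end PainleveIII3

open PainleveIII3 in
theorem stmt2_general {𝕜 : Type*} [NontriviallyNormedField 𝕜] {ε t₀ x : 𝕜}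
    (hε : ε ≠ 0) (ht₀ : t₀ ≠ 0) (hx : x ≠ 0) {q p r : 𝕜 → 𝕜}
    (hq : DifferentiableAt 𝕜 q t₀)
    (hs : DifferentiableAt 𝕜 (fun t => p t * q t + ε * r t) t₀)
    (hqt₀ : q t₀ ≠ 0)
    {A B : 𝕜 → 𝕜 → Matrix (Fin 2) (Fin 2) 𝕜}
    (hA : ∀ x t, A x t = (1 / x) •
      !![r t + p t * q t / ε, (1 - q t / x) / ε;
         (t * x - 1 / q t) / ε, -(r t + p t * q t / ε)])
    (hB : ∀ x t, B x t = (1 / (ε * t)) •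
        !![p t * q t + ε * r t, 1; 0, -(p t * q t + ε * r t)]
      + (x / ε) • !![0, 0; 1, 0]) :
    curvature A B x t₀ = 0 ↔
      t₀ * deriv q t₀ = 2 * p t₀ * (q t₀) ^ 2 / ε + 2 * q t₀ * r t₀ ∧
        t₀ * deriv (fun t => p t * q t + ε * r t) t₀ = (q t₀ * t₀ - (q t₀)⁻¹) / ε := by
  have div_s (t : 𝕜) : r t + p t * q t / ε = (p t * q t + ε * r t) / ε := by
    field_simp
    ring
  have A_eq : A = connectionMatrix ε q (fun t => p t * q t + ε * r t) := by
    funext x t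
    rw [hA, div_s, connectionMatrix]
  have B_eq : B = deformationMatrix ε (fun t => p t * q t + ε * r t) := funext₂ hB
  have q_velocity : 2 * p t₀ * (q t₀) ^ 2 / ε + 2 * q t₀ * r t₀ =
      2 * q t₀ * (p t₀ * q t₀ + ε * r t₀) / ε := by
    field_simp
  rw [A_eq, B_eq, q_velocity, curvature_eq_zero_iff hε ht₀ hx hq.hasDerivAt hs.hasDerivAt hqt₀]

/- Painlevé III₃: the zero-curvature equation for the pencil of connections holds
   for all x ≠ 0 iff the two isomonodromy equations hold. -/
theorem stmt2
    (ε : ℂ) (hε : ε ≠ 0)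
    (U : Set ℂ) (hU : IsOpen U) (hU0 : ∀ t ∈ U, t ≠ 0)
    (q p r : ℂ → ℂ)
    (hq : ∀ t ∈ U, DifferentiableAt ℂ q t)
    (hp : ∀ t ∈ U, DifferentiableAt ℂ p t)
    (hr : ∀ t ∈ U, DifferentiableAt ℂ r t)
    (hqne : ∀ t ∈ U, q t ≠ 0)
    (A B : ℂ → ℂ → Matrix (Fin 2) (Fin 2) ℂ)
    (hA : ∀ x t, A x t = (1 / x) •
      !![r t + p t * q t / ε, (1 - q t / x) / ε;
         (t * x - 1 / q t) / ε, -(r t + p t * q t / ε)])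
    (hB : ∀ x t, B x t = (1 / (ε * t)) •
        !![p t * q t + ε * r t, 1; 0, -(p t * q t + ε * r t)]
      + (x / ε) • !![0, 0; 1, 0])
    (t₀ : ℂ) (ht₀ : t₀ ∈ U) :
    (∀ x : ℂ, x ≠ 0 →
        Matrix.of (fun i j => deriv (fun t => A x t i j) t₀)
          - Matrix.of (fun i j => deriv (fun y => B y t₀ i j) x)
          + (A x t₀ * B x t₀ - B x t₀ * A x t₀) = 0)
      ↔ (t₀ * deriv q t₀ = 2 * p t₀ * (q t₀) ^ 2 / ε + 2 * q t₀ * r t₀ ∧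
         t₀ * deriv (fun t => p t * q t + ε * r t) t₀ = (q t₀ * t₀ - (q t₀)⁻¹) / ε) := by
  have zero_curvature_iff {x : ℂ} (hx : x ≠ 0) := stmt2_general hε (hU0 t₀ ht₀) hx (hq t₀ ht₀)
    (((hp t₀ ht₀).mul (hq t₀ ht₀)).add ((hr t₀ ht₀).const_mul ε)) (hqne t₀ ht₀) hA hB
  exact ⟨fun h => (zero_curvature_iff one_ne_zero).1 (h 1 one_ne_zero),
    fun h x hx => (zero_curvature_iff hx).2 h⟩
end

section
/- Fix ε ∈ ℂ∖{0}, let U ⊆ ℂ∖{0} be open and let q, p, r : U → ℂ be differentiable with q nonvanishing on U. Suppose at a point t ∈ U the equations t·q′(t) = 2pq²/ε + 2qr and t·(pq + εr)′(t) = (qt − q⁻¹)/ε hold. Then the function H(t) := p(t)²q(t)² − t·q(t) − q(t)⁻¹ satisfies H′(t) = (2r − q²t(2r+1))/(tq) − 2pqε·r′(t). -/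
/-!
In the variables `q` and `s = p q` the Hamiltonian is `H = s² - t q - q⁻¹`, so with `w = t q - q⁻¹`
the chain rule gives `H' = 2 s s' - q - w (q' / q)`. The two isomonodromy equations say
`q' / q = 2 (s / ε + r) / t` and `s' = w / (ε t) - ε r'`. Hence the terms `± 2 s w / (ε t)` cancel,
and the right-hand side keeps only `-2 r w / t - q - 2 s ε r'`.
-/

/-- The Painlevé III₃ Hamiltonian `H(t; q, p)`, as a function of the time and the two canonical
coordinates; it is meaningful for `q ≠ 0` only, as `q⁻¹ = 0` at `q = 0`. -/
def painleveIIIHamiltonian {K : Type*} [Field K] (t q p : K) : K :=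
  p ^ 2 * q ^ 2 - t * q - q⁻¹

section Algebra

variable {K : Type*} [Field K] {ε t q s r q' s' r' m' : K}

theorem time_ne_zero_of_isomonodromy (hε : ε ≠ 0) (hq : q ≠ 0)
    (hm' : t * m' = (q * t - q⁻¹) / ε) : t ≠ 0 := by
  rintro rfl
  have hq_inv : -q⁻¹ / ε = 0 := by simpa using hm'.symm
  simp [hε, hq] at hq_inv

theorem hamiltonian_velocity_eq_of_isomonodromy (ht : t ≠ 0) (hq : q ≠ 0)
    (hq' : t * q' = 2 * q * (s / ε + r))
    (hs' : t * (s' + ε * r') = (q * t - q⁻¹) / ε) :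
    2 * s * s' - q - (t * q - q⁻¹) * (q' / q) =
      (2 * r - q ^ 2 * t * (2 * r + 1)) / (t * q) - 2 * s * ε * r' := by
  have logDeriv_q : q' / q = 2 * (s / ε + r) / t := by
    rw [div_eq_div_iff hq ht]
    linear_combination hq'
  have velocity_s : s' = (q * t - q⁻¹) / ε / t - ε * r' := by
    rw [eq_sub_iff_add_eq, eq_div_iff ht, mul_comm, hs']
  calc 2 * s * s' - q - (t * q - q⁻¹) * (q' / q)
      = -2 * r * (t * q - q⁻¹) / t - q - 2 * s * ε * r' := by
        rw [logDeriv_q, velocity_s]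
        ring
    _ = (2 * r - q ^ 2 * t * (2 * r + 1)) / (t * q) - 2 * s * ε * r' := by
        field_simp
        ring

end Algebra

section Calculus

variable {𝕜 : Type*} [NontriviallyNormedField 𝕜] {q p r : 𝕜 → 𝕜} {ε t q' s' : 𝕜}

theorem hasDerivAt_painleveIIIHamiltonian (hq : HasDerivAt q q' t)
    (hpq : HasDerivAt (fun u => p u * q u) s' t) (hq0 : q t ≠ 0) :
    HasDerivAt (fun u => painleveIIIHamiltonian u (q u) (p u))
      (2 * (p t * q t) * s' - q t - (t * q t - (q t)⁻¹) * (q' / q t)) t := by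
  have hH_eq : (fun u => painleveIIIHamiltonian u (q u) (p u)) =
      fun u => (p u * q u) ^ 2 - u * q u - (q u)⁻¹ := by
    simp only [painleveIIIHamiltonian, mul_pow]
  rw [hH_eq]
  refine (((hpq.fun_pow 2).fun_sub ((hasDerivAt_id' t).fun_mul hq)).fun_sub
    (hq.fun_inv hq0)).congr_deriv ?_
  push_cast
  field_simp
  ring

theorem stmt3_general (hε : ε ≠ 0) (hq : DifferentiableAt 𝕜 q t) (hp : DifferentiableAt 𝕜 p t)
    (hr : DifferentiableAt 𝕜 r t) (hq0 : q t ≠ 0)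
    (h1 : t * deriv q t = 2 * p t * (q t) ^ 2 / ε + 2 * q t * r t)
    (h2 : t * deriv (fun u => p u * q u + ε * r u) t = (q t * t - (q t)⁻¹) / ε) :
    HasDerivAt (fun u => painleveIIIHamiltonian u (q u) (p u))
      ((2 * r t - (q t) ^ 2 * t * (2 * r t + 1)) / (t * q t)
        - 2 * p t * q t * ε * deriv r t) t := by
  have ht : t ≠ 0 := time_ne_zero_of_isomonodromy hε hq0 h2
  have hpq : HasDerivAt (fun u => p u * q u) (deriv (fun u => p u * q u) t) t :=
    (hp.fun_mul hq).hasDerivAt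
  rw [(hpq.fun_add (hr.hasDerivAt.const_mul ε)).deriv] at h2
  have h1' : t * deriv q t = 2 * q t * (p t * q t / ε + r t) := by
    rw [h1]
    ring
  refine (hasDerivAt_painleveIIIHamiltonian hq.hasDerivAt hpq hq0).congr_deriv ?_
  rw [hamiltonian_velocity_eq_of_isomonodromy ht hq0 h1' h2]
  ring

end Calculus

/- Painlevé III₃: evolution of the Hamiltonian H = p²q² − tq − q⁻¹ along the
   isomonodromy equations. -/
theorem stmt3
    (ε : ℂ) (hε : ε ≠ 0)
    (U : Set ℂ) (hU : IsOpen U) (hU0 : ∀ t ∈ U, t ≠ 0)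
    (q p r : ℂ → ℂ)
    (hq : ∀ t ∈ U, DifferentiableAt ℂ q t)
    (hp : ∀ t ∈ U, DifferentiableAt ℂ p t)
    (hr : ∀ t ∈ U, DifferentiableAt ℂ r t)
    (hqne : ∀ t ∈ U, q t ≠ 0)
    (t : ℂ) (ht : t ∈ U)
    (h1 : t * deriv q t = 2 * p t * (q t) ^ 2 / ε + 2 * q t * r t)
    (h2 : t * deriv (fun u => p u * q u + ε * r u) t = (q t * t - (q t)⁻¹) / ε) :
    deriv (fun u => (p u) ^ 2 * (q u) ^ 2 - u * q u - (q u)⁻¹) t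
      = (2 * r t - (q t) ^ 2 * t * (2 * r t + 1)) / (t * q t)
        - 2 * p t * q t * ε * deriv r t :=
  (stmt3_general hε (hq t ht) (hp t ht) (hr t ht) (hqne t ht) h1 h2).deriv
end

section
/- Fix ε ∈ ℂ∖{0} and H ∈ ℂ, let U ⊆ ℂ∖{0} be open and connected, and let q, p, r : U → ℂ be differentiable with q and p nonvanishing on U. Suppose that p(t)²q(t)² = t·q(t) + H + q(t)⁻¹ for all t ∈ U, and that t·q′(t) = 2pq²/ε + 2qr and t·r′(t) = (2r − q²t(2r+1))/(2pq²ε) on U. Then q is twice differentiable on U and satisfies the ε-deformed Painlevé III₃ equation q″ = (q′)²/q − q′/t + (1/ε²)·(2q²/t − 2/t²). -/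
/-!
Write `θ = t d/dt` and `y = p q`. The first flow equation says `θ (log q) = 2 y / ε + 2 r`, while
Painlevé III₃ is the equation `θ² (log q) = (2 / ε²) (t q - q⁻¹)`. Differentiating the spectral
constraint `y² = t q + H + q⁻¹` along the flow gives `θ y = (t q - q⁻¹) / ε + A / (2 y)` with
`A = t q + 2 r (t q - q⁻¹)`, and the second flow equation is exactly `ε θ r = -A / (2 y)`. Hence
`r` cancels from `θ (2 y / ε + 2 r)`.
-/

open Filter Topology

section Flow

variable {K : Type*} [Field K] {ε t q r y q' y' r' : K}

lemma mul_deriv_y_eq_of_flow [NeZero (2 : K)] (hq : q ≠ 0) (hy : y ≠ 0)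
    (hspec : 2 * y * y' = q + (t - (q ^ 2)⁻¹) * q')
    (hflow : t * q' = q * (2 * y / ε + 2 * r)) :
    t * y' = (t * q - q⁻¹) / ε + (t * q + 2 * r * (t * q - q⁻¹)) / (2 * y) := by
  have h2y : 2 * y ≠ 0 := mul_ne_zero two_ne_zero hy
  refine mul_left_cancel₀ h2y ?_
  calc 2 * y * (t * y') = t * q + (t - (q ^ 2)⁻¹) * (t * q') := by
        linear_combination t * hspec
    _ = t * q + (t * q - q⁻¹) * (2 * y / ε + 2 * r) := by
        rw [hflow]; field_simp
    _ = 2 * y * ((t * q - q⁻¹) / ε + (t * q + 2 * r * (t * q - q⁻¹)) / (2 * y)) := by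
        rw [mul_add (2 * y), mul_div_cancel₀ _ h2y]; ring

lemma mul_deriv_r_eq_of_flow (hq : q ≠ 0)
    (hr : t * r' = (2 * r - q ^ 2 * t * (2 * r + 1)) / (2 * y * q * ε)) :
    t * r' = -((t * q + 2 * r * (t * q - q⁻¹)) / (2 * y)) / ε := by
  rw [hr]
  field_simp
  ring

lemma two_mul_deriv_y_div_add_two_mul_deriv_r_eq [NeZero (2 : K)]
    (ht : t ≠ 0) (hq : q ≠ 0) (hy : y ≠ 0)
    (hspec : 2 * y * y' = q + (t - (q ^ 2)⁻¹) * q')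
    (hflow : t * q' = q * (2 * y / ε + 2 * r))
    (hr : t * r' = (2 * r - q ^ 2 * t * (2 * r + 1)) / (2 * y * q * ε)) :
    2 * y' / ε + 2 * r' = 2 / ε ^ 2 * (q - (t * q)⁻¹) := by
  refine mul_left_cancel₀ ht ?_
  calc t * (2 * y' / ε + 2 * r') = 2 * (t * y') / ε + 2 * (t * r') := by ring
    _ = 2 / ε ^ 2 * (t * q - q⁻¹) := by
        rw [mul_deriv_y_eq_of_flow hq hy hspec hflow, mul_deriv_r_eq_of_flow hq hr]; ring
    _ = t * (2 / ε ^ 2 * (q - (t * q)⁻¹)) := by field_simp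

end Flow

section Derivatives

variable {𝕜 : Type*} [NontriviallyNormedField 𝕜] {q : 𝕜 → 𝕜} {t : 𝕜}

lemma two_mul_mul_deriv_eq_of_spectralCurve {y : 𝕜 → 𝕜} {H q' y' : 𝕜}
    (hq : HasDerivAt q q' t) (hy : HasDerivAt y y' t) (hqt : q t ≠ 0)
    (hspec : ∀ᶠ s in 𝓝 t, y s ^ 2 = s * q s + H + (q s)⁻¹) :
    2 * y t * y' = q t + (t - (q t ^ 2)⁻¹) * q' := by
  have hleft : HasDerivAt (fun s => y s ^ 2) (2 * y t * y') t := by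
    simpa using hy.fun_pow 2
  have hright : HasDerivAt (fun s => s * q s + H + (q s)⁻¹)
      (1 * q t + t * q' + -q' / q t ^ 2) t :=
    (((hasDerivAt_id' t).mul hq).add_const H).add (hq.fun_inv hqt)
  rw [hleft.unique (hright.congr_of_eventuallyEq hspec)]
  ring

lemma hasDerivAt_deriv_of_hasDerivAt_mul_logDeriv {u' : 𝕜} (ht : t ≠ 0) (hqt : q t ≠ 0)
    (hq : DifferentiableAt 𝕜 q t) (hu : HasDerivAt (fun s => s * logDeriv q s) u' t) :
    HasDerivAt (deriv q) (deriv q t ^ 2 / q t - deriv q t / t + q t / t * u') t := by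
  have hderiv : deriv q =ᶠ[𝓝 t] fun s => s * logDeriv q s * q s / s := by
    filter_upwards [hq.continuousAt.eventually_ne hqt, eventually_ne_nhds ht] with s hqs hs
    rw [logDeriv_apply]
    field_simp
  have hquot := (hu.fun_mul hq.hasDerivAt).fun_div (hasDerivAt_id' t) ht
  refine (hquot.congr_of_eventuallyEq hderiv).congr_deriv ?_
  rw [logDeriv_apply]
  field_simp
  ring

end Derivatives

theorem stmt4_general {𝕜 : Type*} [NontriviallyNormedField 𝕜] [NeZero (2 : 𝕜)]
    {ε : 𝕜} (hε : ε ≠ 0) {H : 𝕜} {U : Set 𝕜} (hU : IsOpen U) (hU0 : ∀ t ∈ U, t ≠ 0)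
    {q p r : 𝕜 → 𝕜}
    (hq : ∀ t ∈ U, DifferentiableAt 𝕜 q t)
    (hp : ∀ t ∈ U, DifferentiableAt 𝕜 p t)
    (hr : ∀ t ∈ U, DifferentiableAt 𝕜 r t)
    (hqne : ∀ t ∈ U, q t ≠ 0)
    (hpne : ∀ t ∈ U, p t ≠ 0)
    (hspec : ∀ t ∈ U, p t ^ 2 * q t ^ 2 = t * q t + H + (q t)⁻¹)
    (h1 : ∀ t ∈ U, t * deriv q t = 2 * p t * q t ^ 2 / ε + 2 * q t * r t)
    (h2 : ∀ t ∈ U, t * deriv r t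
      = (2 * r t - q t ^ 2 * t * (2 * r t + 1)) / (2 * p t * q t ^ 2 * ε))
    {t : 𝕜} (ht : t ∈ U) :
    HasDerivAt (deriv q) (deriv q t ^ 2 / q t - deriv q t / t
      + 1 / ε ^ 2 * (2 * q t ^ 2 / t - 2 / t ^ 2)) t := by
  have ht0 := hU0 t ht
  have hqt := hqne t ht
  have hUt : ∀ᶠ s in 𝓝 t, s ∈ U := hU.mem_nhds ht
  have hy := (hp t ht).hasDerivAt.fun_mul (hq t ht).hasDerivAt
  have hcurve := two_mul_mul_deriv_eq_of_spectralCurve (hq t ht).hasDerivAt hy hqt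
    (hUt.mono fun s hs => (mul_pow _ _ 2).trans (hspec s hs))
  have hflow : ∀ s ∈ U, s * deriv q s = q s * (2 * (p s * q s) / ε + 2 * r s) :=
    fun s hs => (h1 s hs).trans (by ring)
  have hrflow : t * deriv r t
      = (2 * r t - q t ^ 2 * t * (2 * r t + 1)) / (2 * (p t * q t) * q t * ε) :=
    (h2 t ht).trans (by congr 1; ring)
  have hlog : (fun s => s * logDeriv q s) =ᶠ[𝓝 t] fun s => 2 * (p s * q s) / ε + 2 * r s := by
    filter_upwards [hUt] with s hs
    rw [logDeriv_apply, ← mul_div_assoc, hflow s hs, mul_div_cancel_left₀ _ (hqne s hs)]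
  have hu := (((hy.const_mul 2).div_const ε).fun_add
    ((hr t ht).hasDerivAt.const_mul 2)).congr_of_eventuallyEq hlog
  rw [two_mul_deriv_y_div_add_two_mul_deriv_r_eq ht0 hqt (mul_ne_zero (hpne t ht) hqt) hcurve
    (hflow t ht) hrflow] at hu
  refine (hasDerivAt_deriv_of_hasDerivAt_mul_logDeriv ht0 hqt (hq t ht) hu).congr_deriv ?_
  field_simp

/- Painlevé III₃: along the isomonodromy flow w₁ (with the spectral constraint),
   q solves the ε-deformed Painlevé III₃ equation. -/
theorem stmt4
    (ε : ℂ) (hε : ε ≠ 0) (H : ℂ)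
    (U : Set ℂ) (hU : IsOpen U) (hUc : IsConnected U) (hU0 : ∀ t ∈ U, t ≠ 0)
    (q p r : ℂ → ℂ)
    (hq : ∀ t ∈ U, DifferentiableAt ℂ q t)
    (hp : ∀ t ∈ U, DifferentiableAt ℂ p t)
    (hr : ∀ t ∈ U, DifferentiableAt ℂ r t)
    (hqne : ∀ t ∈ U, q t ≠ 0)
    (hpne : ∀ t ∈ U, p t ≠ 0)
    (hspec : ∀ t ∈ U, (p t) ^ 2 * (q t) ^ 2 = t * q t + H + (q t)⁻¹)
    (h1 : ∀ t ∈ U, t * deriv q t = 2 * p t * (q t) ^ 2 / ε + 2 * q t * r t)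
    (h2 : ∀ t ∈ U, t * deriv r t
      = (2 * r t - (q t) ^ 2 * t * (2 * r t + 1)) / (2 * p t * (q t) ^ 2 * ε)) :
    ∀ t ∈ U, DifferentiableAt ℂ (deriv q) t ∧
      deriv (deriv q) t = (deriv q t) ^ 2 / q t - deriv q t / t
        + (1 / ε ^ 2) * (2 * (q t) ^ 2 / t - 2 / t ^ 2) := by
  intro t ht
  have hq' := stmt4_general hε hU hU0 hq hp hr hqne hpne hspec h1 h2 ht
  exact ⟨hq'.differentiableAt, hq'.deriv⟩
end

section
/- Fix t ∈ ℂ∖{0}, and let q, p, r ∈ ℂ with q ≠ 0. Set H := p²q² − tq − q⁻¹ and suppose H² − 4t ≠ 0. Define W(q, p, r) = (pq/(6(H² − 4t)))·(tq + (H + 6tq)r + (6H + 12tq)r² + 8p²q²r³). Then W((qt)⁻¹, −tpq², −(r + 1/2)) = W(q, p, r). -/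
/-!
On the spectral curve `p²q² = tq + H + q⁻¹` the bracket in `W` is half the binary cubic
`2 tq u³ + H u v (u + v) + 2 q⁻¹ v³` evaluated at `(u, v) = (2r + 1, 2r)`. The involution
exchanges `tq` with `q⁻¹` and sends `(u, v)` to `(-v, -u)`. The cubic is symmetric under the
simultaneous exchange of `tq` with `q⁻¹` and of `u` with `v`, and it is odd in `(u, v)`, so it
changes sign. So does the prefactor `pq`, and the two signs cancel.
-/

theorem mul_inv_mul_eq_inv {G₀ : Type*} [GroupWithZero G₀] {a : G₀} (ha : a ≠ 0) (b : G₀) :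
    a * (b * a)⁻¹ = b⁻¹ := by
  rw [← div_eq_mul_inv, div_mul_cancel_right₀ ha]

section BinaryCubic

variable {R : Type*} [CommRing R]

/-- The binary cubic form `2 a u³ + H u v (u + v) + 2 b v³`. With `a = tq`, `b = q⁻¹`, `u = 2r + 1`,
`v = 2r` it is twice the cubic polynomial in `r` occurring in the Plebański function; the doubling
keeps the coefficients integral. -/
def plebanskiCubic (a H b u v : R) : R :=
  2 * a * u ^ 3 + H * u * v * (u + v) + 2 * b * v ^ 3

theorem plebanskiCubic_swap (a H b u v : R) :
    plebanskiCubic b H a v u = plebanskiCubic a H b u v := by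
  unfold plebanskiCubic
  ring

theorem plebanskiCubic_neg (a H b u v : R) :
    plebanskiCubic a H b (-u) (-v) = -plebanskiCubic a H b u v := by
  unfold plebanskiCubic
  ring

end BinaryCubic

section Field

variable {K : Type*} [Field K] {t H q p : K}

/-- The spectral curve `p²q² = tq + H + q⁻¹` of Painlevé III₃, as a condition on `(q, p)`; for
`q ≠ 0` it says that the Hamiltonian takes the value `H` at `(q, p)`. -/
def OnSpectralCurve (t H q p : K) : Prop :=
  p ^ 2 * q ^ 2 = t * q + H + q⁻¹

/-- The Plebański function `W` of the Painlevé III₃ Joyce structure. The value `H` of the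
Hamiltonian is an independent argument, tied to `(q, p)` only by `OnSpectralCurve`. -/
def plebanskiFunction (t H q p r : K) : K :=
  (p * q / (6 * (H ^ 2 - 4 * t))) *
    (t * q + (H + 6 * t * q) * r + (6 * H + 12 * t * q) * r ^ 2 + 8 * p ^ 2 * q ^ 2 * r ^ 3)

theorem involution_mul_eq_neg (ht : t ≠ 0) (hq : q ≠ 0) (p : K) :
    -t * p * q ^ 2 * (q * t)⁻¹ = -(p * q) := by
  field_simp

theorem OnSpectralCurve.involution (hcurve : OnSpectralCurve t H q p) (ht : t ≠ 0) (hq : q ≠ 0) :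
    OnSpectralCurve t H (q * t)⁻¹ (-t * p * q ^ 2) := by
  unfold OnSpectralCurve at *
  calc (-t * p * q ^ 2) ^ 2 * (q * t)⁻¹ ^ 2
      = p ^ 2 * q ^ 2 := by rw [← mul_pow, involution_mul_eq_neg ht hq, neg_sq, mul_pow]
    _ = t * q + H + q⁻¹ := hcurve
    _ = t * (q * t)⁻¹ + H + ((q * t)⁻¹)⁻¹ := by
      rw [mul_inv_mul_eq_inv ht, inv_inv]
      ring

theorem OnSpectralCurve.two_mul_bracket_eq_plebanskiCubic (hcurve : OnSpectralCurve t H q p)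
    (r : K) :
    2 * (t * q + (H + 6 * t * q) * r + (6 * H + 12 * t * q) * r ^ 2 + 8 * p ^ 2 * q ^ 2 * r ^ 3) =
      plebanskiCubic (t * q) H q⁻¹ (2 * r + 1) (2 * r) := by
  unfold OnSpectralCurve at hcurve
  unfold plebanskiCubic
  linear_combination 16 * r ^ 3 * hcurve

theorem OnSpectralCurve.mul_plebanskiFunction (hcurve : OnSpectralCurve t H q p)
    (h6 : (6 : K) ≠ 0) (hD : H ^ 2 - 4 * t ≠ 0) (r : K) :
    12 * (H ^ 2 - 4 * t) * plebanskiFunction t H q p r =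
      p * q * plebanskiCubic (t * q) H q⁻¹ (2 * r + 1) (2 * r) := by
  rw [← hcurve.two_mul_bracket_eq_plebanskiCubic, plebanskiFunction]
  field_simp
  ring

theorem stmt6_general (h6 : (6 : K) ≠ 0) (ht : t ≠ 0) (hq : q ≠ 0)
    (hcurve : OnSpectralCurve t H q p) (hD : H ^ 2 - 4 * t ≠ 0) (r : K) :
    plebanskiFunction t H (q * t)⁻¹ (-t * p * q ^ 2) (-(r + 1 / 2)) =
      plebanskiFunction t H q p r := by
  have h2 : (2 : K) ≠ 0 := fun h ↦ h6 (by linear_combination 3 * h)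
  have h12 : (12 : K) ≠ 0 := fun h ↦ mul_ne_zero h2 h6 (by linear_combination h)
  have hu : 2 * -(r + 1 / 2) + 1 = -(2 * r) := by field_simp; ring
  have hv : 2 * -(r + 1 / 2) = -(2 * r + 1) := by field_simp
  apply mul_left_cancel₀ (mul_ne_zero h12 hD)
  rw [(hcurve.involution ht hq).mul_plebanskiFunction h6 hD, hcurve.mul_plebanskiFunction h6 hD,
    involution_mul_eq_neg ht hq, mul_inv_mul_eq_inv ht, inv_inv, mul_comm q t, hu, hv,
    plebanskiCubic_neg, plebanskiCubic_swap, neg_mul_neg]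

end Field

/- Painlevé III₃: the Plebański function W is invariant under the involution
   (q, p, r) ↦ ((qt)⁻¹, −tpq², −(r + 1/2)). -/
theorem stmt6 (t : ℂ) (ht : t ≠ 0) (q p r : ℂ) (hq : q ≠ 0)
    (H : ℂ) (hH : H = p ^ 2 * q ^ 2 - t * q - q⁻¹) (hD : H ^ 2 - 4 * t ≠ 0)
    (W : ℂ → ℂ → ℂ → ℂ)
    (hW : ∀ q p r : ℂ, W q p r = (p * q / (6 * (H ^ 2 - 4 * t))) *
      (t * q + (H + 6 * t * q) * r + (6 * H + 12 * t * q) * r ^ 2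
        + 8 * p ^ 2 * q ^ 2 * r ^ 3)) :
    W ((q * t)⁻¹) (-t * p * q ^ 2) (-(r + 1 / 2)) = W q p r := by
  have hcurve : OnSpectralCurve t H q p := by
    unfold OnSpectralCurve
    linear_combination -hH
  simpa only [hW, plebanskiFunction] using stmt6_general (by norm_num) ht hq hcurve hD r
end

section
/- Fix ε ∈ ℂ∖{0}, let U ⊆ ℂ∖{0} be open and let q, p : U → ℂ be differentiable with q and p nonvanishing on U. Suppose that on U: t·q′ = 2pq²/ε + 2qr and t·p′ = −(2p²q − t + q⁻²)/ε + r(−4p²q³ + 2q²t − 2)/(2pq³), for some function r : U → ℂ. Then the function H(t) := p(t)²q(t)² − t·q(t) − q(t)⁻¹ satisfies t·H′(t) = −t·q(t) for all t ∈ U. -/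
/-!
The `r`-part of the flow is tangent to the level curves of `H(t, ·, ·)`, so the whole flow is the
Hamiltonian vector field `(∂H/∂p, -∂H/∂q)` multiplied by `(ε⁻¹ + r / (p q)) / t`. A Hamiltonian
changes along any such rescaled flow only through its explicit time dependence, which here is
`∂H/∂t = -q`.
-/

open ContinuousLinearMap (fst snd coe_fst' coe_snd' comp_apply)

section TimeDependentHamiltonian

variable {𝕜 E F : Type*} [NontriviallyNormedField 𝕜] [NormedAddCommGroup E] [NormedSpace 𝕜 E]
  [NormedAddCommGroup F] [NormedSpace 𝕜 F] {t : 𝕜}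

theorem hasDerivAt_along_curve_of_tangent_level {H : 𝕜 × E → F} {H' : 𝕜 × E →L[𝕜] F}
    {x : 𝕜 → E} {x' : E} (hH : HasFDerivAt H H' (t, x t)) (hx : HasDerivAt x x' t)
    (tangent : H' (0, x') = 0) :
    HasDerivAt (fun u => H (u, x u)) (H' (1, 0)) t := by
  have chain_rule : HasDerivAt (fun u => H (u, x u)) (H' (1, x')) t :=
    hH.comp_hasDerivAt t ((hasDerivAt_id t).prodMk hx)
  have split : H' (1, x') = H' (1, 0) := by
    rw [← add_zero (H' (1, 0)), ← tangent, ← map_add, Prod.mk_add_mk, add_zero, zero_add]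
  rwa [split] at chain_rule

theorem hasDerivAt_along_rescaled_hamiltonian_flow {H : 𝕜 × 𝕜 × 𝕜 → 𝕜} {Ht Hq Hp scale : 𝕜}
    {q p : 𝕜 → 𝕜}
    (hH : HasFDerivAt H
      (Ht • fst 𝕜 𝕜 (𝕜 × 𝕜) + Hq • (fst 𝕜 𝕜 𝕜 ∘L snd 𝕜 𝕜 (𝕜 × 𝕜))
        + Hp • (snd 𝕜 𝕜 𝕜 ∘L snd 𝕜 𝕜 (𝕜 × 𝕜))) (t, q t, p t))
    (hq : HasDerivAt q (scale * Hp) t) (hp : HasDerivAt p (-(scale * Hq)) t) :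
    HasDerivAt (fun u => H (u, q u, p u)) Ht t := by
  simpa using hasDerivAt_along_curve_of_tangent_level (x := fun u => (q u, p u)) hH
    (hq.prodMk hp) (by
      simp only [add_apply, smul_apply, coe_fst', coe_snd', comp_apply, smul_eq_mul]
      ring)

end TimeDependentHamiltonian

section PainleveIII3

variable {𝕜 : Type*} [NontriviallyNormedField 𝕜]

/-- The Painlevé III₃ Hamiltonian `H(t, q, p) = p²q² - tq - q⁻¹`, as a function of the triple
`(t, q, p)` of time, position and momentum; it is meaningful only for `q ≠ 0`. -/
def painleveIII3Hamiltonian (x : 𝕜 × 𝕜 × 𝕜) : 𝕜 :=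
  x.2.2 ^ 2 * x.2.1 ^ 2 - x.1 * x.2.1 - x.2.1⁻¹

theorem hasFDerivAt_painleveIII3Hamiltonian {q : 𝕜} (hq : q ≠ 0) (t p : 𝕜) :
    HasFDerivAt painleveIII3Hamiltonian
      ((-q) • fst 𝕜 𝕜 (𝕜 × 𝕜)
        + (2 * p ^ 2 * q - t + (q ^ 2)⁻¹) • (fst 𝕜 𝕜 𝕜 ∘L snd 𝕜 𝕜 (𝕜 × 𝕜))
        + (2 * p * q ^ 2) • (snd 𝕜 𝕜 𝕜 ∘L snd 𝕜 𝕜 (𝕜 × 𝕜))) (t, q, p) := by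
  have dt : HasFDerivAt (fun x : 𝕜 × 𝕜 × 𝕜 => x.1) (fst 𝕜 𝕜 (𝕜 × 𝕜)) (t, q, p) := hasFDerivAt_fst
  have dqp : HasFDerivAt (fun x : 𝕜 × 𝕜 × 𝕜 => x.2) (snd 𝕜 𝕜 (𝕜 × 𝕜)) (t, q, p) :=
    hasFDerivAt_snd
  have dinv := (hasDerivAt_inv hq).comp_hasFDerivAt (t, q, p) dqp.fst
  refine ((((dqp.snd.pow 2).mul (dqp.fst.pow 2)).sub (dt.mul dqp.fst)).sub dinv).congr_fderiv ?_
  refine ContinuousLinearMap.ext fun v => ?_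
  simp only [add_apply, sub_apply, smul_apply, comp_apply, smul_eq_mul, nsmul_eq_mul,
    Nat.cast_ofNat, Nat.add_one_sub_one, pow_one]
  ring

theorem hasDerivAt_painleveIII3Hamiltonian_of_rescaled_flow {t scale q' p' : 𝕜} {q p : 𝕜 → 𝕜}
    (ht : t ≠ 0) (hq : HasDerivAt q q' t) (hp : HasDerivAt p p' t) (hq0 : q t ≠ 0)
    (flow_q : t * q' = scale * (2 * p t * q t ^ 2))
    (flow_p : t * p' = -(scale * (2 * p t ^ 2 * q t - t + (q t ^ 2)⁻¹))) :
    HasDerivAt (fun u => painleveIII3Hamiltonian (u, q u, p u)) (-q t) t := by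
  apply hasDerivAt_along_rescaled_hamiltonian_flow (scale := t⁻¹ * scale)
    (hasFDerivAt_painleveIII3Hamiltonian hq0 t (p t))
  · rwa [mul_assoc, ← flow_q, inv_mul_cancel_left₀ ht]
  · rwa [mul_assoc, ← mul_neg, ← flow_p, inv_mul_cancel_left₀ ht]

theorem stmt9_general {t c r q' p' : 𝕜} {q p : 𝕜 → 𝕜} (two_ne : (2 : 𝕜) ≠ 0) (ht : t ≠ 0)
    (hq : HasDerivAt q q' t) (hp : HasDerivAt p p' t) (hq0 : q t ≠ 0) (hp0 : p t ≠ 0)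
    (flow_q : t * q' = c * (2 * p t * q t ^ 2) + 2 * q t * r)
    (flow_p : t * p' = c * -(2 * p t ^ 2 * q t - t + (q t ^ 2)⁻¹)
      + r * (-4 * p t ^ 2 * q t ^ 3 + 2 * q t ^ 2 * t - 2) / (2 * p t * q t ^ 3)) :
    HasDerivAt (fun u => p u ^ 2 * q u ^ 2 - u * q u - (q u)⁻¹) (-q t) t := by
  have rescaled_q : t * q' = (c + r / (p t * q t)) * (2 * p t * q t ^ 2) := by
    rw [flow_q]
    field_simp
  have rescaled_p : t * p'
      = -((c + r / (p t * q t)) * (2 * p t ^ 2 * q t - t + (q t ^ 2)⁻¹)) := by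
    rw [flow_p]
    field_simp
    ring
  exact hasDerivAt_painleveIII3Hamiltonian_of_rescaled_flow ht hq hp hq0 rescaled_q rescaled_p

end PainleveIII3

/- Painlevé III₃: along the flow w₁ − qt·w₂ the Hamiltonian H = p²q² − tq − q⁻¹
   satisfies t·H′ = −tq. -/
theorem stmt9
    (ε : ℂ) (hε : ε ≠ 0)
    (U : Set ℂ) (hU : IsOpen U) (hU0 : ∀ t ∈ U, t ≠ 0)
    (q p : ℂ → ℂ)
    (hq : ∀ t ∈ U, DifferentiableAt ℂ q t)
    (hp : ∀ t ∈ U, DifferentiableAt ℂ p t)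
    (hqne : ∀ t ∈ U, q t ≠ 0)
    (hpne : ∀ t ∈ U, p t ≠ 0)
    (r : ℂ → ℂ)
    (h1 : ∀ t ∈ U, t * deriv q t = 2 * p t * (q t) ^ 2 / ε + 2 * q t * r t)
    (h2 : ∀ t ∈ U, t * deriv p t
      = -(2 * (p t) ^ 2 * q t - t + ((q t) ^ 2)⁻¹) / ε
        + r t * (-4 * (p t) ^ 2 * (q t) ^ 3 + 2 * (q t) ^ 2 * t - 2)
            / (2 * p t * (q t) ^ 3)) :
    ∀ t ∈ U,
      t * deriv (fun u => (p u) ^ 2 * (q u) ^ 2 - u * q u - (q u)⁻¹) t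
        = -(t * q t) := by
  intro t ht
  rw [(stmt9_general (c := ε⁻¹) two_ne_zero (hU0 t ht) (hq t ht).hasDerivAt (hp t ht).hasDerivAt
    (hqne t ht) (hpne t ht) (by rw [h1 t ht, div_eq_inv_mul])
    (by rw [h2 t ht, div_eq_inv_mul _ ε])).deriv, mul_neg]
end

section
/- Fix t ∈ ℂ∖{0} and H ∈ ℂ. On Ω = {(q, p, r) ∈ ℂ³ : q ≠ 0, p ≠ 0} define the vector fields V_s(q,p,r) = (2q²p, −t − 2H/q − 3/q², (2r − 2trq² − tq²)/(2pq²)) and V_H(q,p,r) = (0, 0, −1/(2qp)). Then: (a) both V_s and V_H are tangent to the surface Σ = {(q,p,r) ∈ Ω : p²q³ = tq² + Hq + 1}, i.e. the directional derivative of the function p²q³ − tq² − Hq − 1 along each field vanishes at every point of Σ; and (b) the Lie bracket [V_s, V_H](x) := (DV_H)_x·V_s(x) − (DV_s)_x·V_H(x) vanishes at every point x ∈ Σ. -/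
/-!
Let `f` be the defining function of the surface `Σ`. On all of `Ω`, not only on `Σ`, one has the
exact identities `V_s f = 6 q p f`, `V_H f = 0` and `[V_s, V_H] = (0, 0, f / (q³ p²))`, whose
right-hand sides vanish where `f` does. The bracket is easy to compute because `V_H` is vertical:
only its `r`-component has to be differentiated, and `V_s` is affine in `r`.
-/

open VectorField

section LineDeriv

variable {𝕜 E F : Type*} [NontriviallyNormedField 𝕜] [AddCommGroup E] [Module 𝕜 E]
  [NormedAddCommGroup F] [NormedSpace 𝕜 F]

theorem hasLineDerivAt_of_forall_add_smul {f : E → F} {x v : E} {w : F}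
    (h : ∀ s : 𝕜, f (x + s • v) = f x + s • w) : HasLineDerivAt 𝕜 f w x v := by
  simp only [HasLineDerivAt, h]
  simpa using ((hasDerivAt_id (0 : 𝕜)).smul_const w).const_add (f x)

end LineDeriv

theorem hasFDerivAt_const_div {𝕜 E : Type*} [NontriviallyNormedField 𝕜] [NormedAddCommGroup E]
    [NormedSpace 𝕜 E] {g : E → 𝕜} {g' : E →L[𝕜] 𝕜} {x : E} (c : 𝕜) (hg : HasFDerivAt g g' x)
    (hx : g x ≠ 0) : HasFDerivAt (fun y ↦ c / g y) (-(c / g x ^ 2) • g') x := by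
  simpa [Function.comp_def, div_eq_mul_inv, smul_smul] using
    ((hasDerivAt_inv hx).comp_hasFDerivAt x hg).const_mul c

namespace PainleveThree

variable {𝕜 : Type*} [NontriviallyNormedField 𝕜]

/-- The function `p² q³ - t q² - H q - 1` of `(q, p, r)` whose zero locus in `{q ≠ 0, p ≠ 0}` is the
surface `Σ`: the equation `p² = t / q + H / q² + 1 / q³` with denominators cleared. -/
def spectralFun (t H : 𝕜) (x : 𝕜 × 𝕜 × 𝕜) : 𝕜 :=
  x.2.1 ^ 2 * x.1 ^ 3 - t * x.1 ^ 2 - H * x.1 - 1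

/-- The vector field `V_s`, the coordinate field of `θ_s` in the variables `(q, p, r)`; it has the
junk value of division by zero where `q p = 0`. -/
def fieldS (t H : 𝕜) (x : 𝕜 × 𝕜 × 𝕜) : 𝕜 × 𝕜 × 𝕜 :=
  (2 * x.1 ^ 2 * x.2.1,
    -t - 2 * H / x.1 - 3 / x.1 ^ 2,
    (2 * x.2.2 - 2 * t * x.2.2 * x.1 ^ 2 - t * x.1 ^ 2) / (2 * x.2.1 * x.1 ^ 2))

/-- The vector field `V_H`, the coordinate field of `θ_H` in the variables `(q, p, r)`; it has the
junk value of division by zero where `q p = 0`. -/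
def fieldH (x : 𝕜 × 𝕜 × 𝕜) : 𝕜 × 𝕜 × 𝕜 :=
  (0, 0, -1 / (2 * x.1 * x.2.1))

theorem fderiv_spectralFun_apply (t H : 𝕜) (x v : 𝕜 × 𝕜 × 𝕜) :
    fderiv 𝕜 (spectralFun t H) x v =
      (3 * x.2.1 ^ 2 * x.1 ^ 2 - 2 * t * x.1 - H) * v.1 + 2 * x.2.1 * x.1 ^ 3 * v.2.1 := by
  have hq : HasFDerivAt (fun y : 𝕜 × 𝕜 × 𝕜 ↦ y.1) _ x := hasFDerivAt_fst (𝕜 := 𝕜)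
  have hp : HasFDerivAt (fun y : 𝕜 × 𝕜 × 𝕜 ↦ y.2.1) _ x :=
    (hasFDerivAt_snd (𝕜 := 𝕜)).fst
  have hf : HasFDerivAt (spectralFun t H) _ x :=
    ((((hp.pow 2).mul (hq.pow 3)).sub ((hq.pow 2).const_mul t)).sub (hq.const_mul H)).sub_const 1
  rw [hf.fderiv]
  simp only [Nat.add_one_sub_one, nsmul_eq_mul, Nat.cast_ofNat, pow_one, sub_apply, add_apply,
    smul_apply, ContinuousLinearMap.coe_fst', smul_eq_mul, ContinuousLinearMap.comp_apply,
    ContinuousLinearMap.coe_snd']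
  ring

theorem fderiv_spectralFun_fieldS (t H : 𝕜) {x : 𝕜 × 𝕜 × 𝕜} (hq : x.1 ≠ 0) :
    fderiv 𝕜 (spectralFun t H) x (fieldS t H x) = 6 * x.1 * x.2.1 * spectralFun t H x := by
  rw [fderiv_spectralFun_apply, fieldS, spectralFun]
  field_simp
  ring

theorem fderiv_spectralFun_fieldH (t H : 𝕜) (x : 𝕜 × 𝕜 × 𝕜) :
    fderiv 𝕜 (spectralFun t H) x (fieldH x) = 0 := by
  simp [fderiv_spectralFun_apply, fieldH]

variable [NeZero (2 : 𝕜)] {x : 𝕜 × 𝕜 × 𝕜}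

theorem fderiv_fieldH_apply (hq : x.1 ≠ 0) (hp : x.2.1 ≠ 0) (v : 𝕜 × 𝕜 × 𝕜) :
    fderiv 𝕜 fieldH x v =
      (0, 0, (x.1 * v.2.1 + x.2.1 * v.1) / (2 * x.1 ^ 2 * x.2.1 ^ 2)) := by
  have hqp : HasFDerivAt (fun y : 𝕜 × 𝕜 × 𝕜 ↦ 2 * y.1 * y.2.1) _ x :=
    (hasFDerivAt_fst.const_mul 2).mul (hasFDerivAt_snd (𝕜 := 𝕜)).fst
  have hqp_ne : 2 * x.1 * x.2.1 ≠ 0 := by simp [hq, hp, two_ne_zero]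
  have hfield : HasFDerivAt fieldH _ x :=
    (hasFDerivAt_const (0 : 𝕜) x).prodMk
      ((hasFDerivAt_const (0 : 𝕜) x).prodMk (hasFDerivAt_const_div (-1) hqp hqp_ne))
  rw [hfield.fderiv]
  simp only [smul_add, neg_smul, ContinuousLinearMap.prod_apply, zero_apply, add_apply, neg_apply,
    smul_apply, ContinuousLinearMap.comp_apply, ContinuousLinearMap.coe_snd',
    ContinuousLinearMap.coe_fst', smul_eq_mul, Prod.mk.injEq, true_and]
  field_simp

theorem differentiableAt_fieldS (t H : 𝕜) (hq : x.1 ≠ 0) (hp : x.2.1 ≠ 0) :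
    DifferentiableAt 𝕜 (fieldS t H) x := by
  unfold fieldS
  fun_prop (disch := simp [hq, hp, two_ne_zero])

theorem fderiv_fieldS_vertical (t H : 𝕜) (hq : x.1 ≠ 0) (hp : x.2.1 ≠ 0) (c : 𝕜) :
    fderiv 𝕜 (fieldS t H) x (0, 0, c) =
      (0, 0, (1 - t * x.1 ^ 2) * c / (x.2.1 * x.1 ^ 2)) := by
  rw [← (differentiableAt_fieldS t H hq hp).lineDeriv_eq_fderiv]
  refine (hasLineDerivAt_of_forall_add_smul fun s ↦ ?_).lineDeriv
  simp only [fieldS, Prod.smul_mk, smul_eq_mul, mul_zero, Prod.fst_add, add_zero, Prod.snd_add,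
    Prod.mk_add_mk, Prod.mk.injEq, true_and]
  field_simp
  ring

theorem lieBracket_fieldS_fieldH (t H : 𝕜) (hq : x.1 ≠ 0) (hp : x.2.1 ≠ 0) :
    lieBracket 𝕜 (fieldS t H) fieldH x =
      (0, 0, spectralFun t H x / (x.1 ^ 3 * x.2.1 ^ 2)) := by
  rw [lieBracket, fderiv_fieldH_apply hq hp, fieldH, fderiv_fieldS_vertical t H hq hp]
  simp only [fieldS, spectralFun, Prod.mk_sub_mk, sub_zero, Prod.mk.injEq, true_and]
  field_simp
  ring

end PainleveThree

open PainleveThree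

theorem stmt10_general {𝕜 : Type*} [NontriviallyNormedField 𝕜] [NeZero (2 : 𝕜)] (t H : 𝕜)
    {x : 𝕜 × 𝕜 × 𝕜} (hq : x.1 ≠ 0) (hp : x.2.1 ≠ 0) :
    (fderiv 𝕜 (spectralFun t H) x (fieldS t H x) = 6 * x.1 * x.2.1 * spectralFun t H x ∧
      fderiv 𝕜 (spectralFun t H) x (fieldH x) = 0) ∧
    lieBracket 𝕜 (fieldS t H) fieldH x = (0, 0, spectralFun t H x / (x.1 ^ 3 * x.2.1 ^ 2)) :=
  ⟨⟨fderiv_spectralFun_fieldS t H hq, fderiv_spectralFun_fieldH t H x⟩,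
    lieBracket_fieldS_fieldH t H hq hp⟩

/- Painlevé III₃: the vector fields V_s and V_H are tangent to the spectral
   surface Σ and their Lie bracket vanishes on Σ. -/
theorem stmt10 (t : ℂ) (ht : t ≠ 0) (H : ℂ)
    (Vs VH : ℂ × ℂ × ℂ → ℂ × ℂ × ℂ)
    (hVs : ∀ x : ℂ × ℂ × ℂ, Vs x =
      (2 * x.1 ^ 2 * x.2.1,
       -t - 2 * H / x.1 - 3 / x.1 ^ 2,
       (2 * x.2.2 - 2 * t * x.2.2 * x.1 ^ 2 - t * x.1 ^ 2) / (2 * x.2.1 * x.1 ^ 2)))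
    (hVH : ∀ x : ℂ × ℂ × ℂ, VH x = (0, 0, -1 / (2 * x.1 * x.2.1)))
    (f : ℂ × ℂ × ℂ → ℂ)
    (hf : ∀ x : ℂ × ℂ × ℂ, f x = x.2.1 ^ 2 * x.1 ^ 3 - t * x.1 ^ 2 - H * x.1 - 1) :
    ∀ x : ℂ × ℂ × ℂ, x.1 ≠ 0 → x.2.1 ≠ 0 → f x = 0 →
      (fderiv ℂ f x (Vs x) = 0 ∧ fderiv ℂ f x (VH x) = 0) ∧
      fderiv ℂ VH x (Vs x) - fderiv ℂ Vs x (VH x) = 0 := by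
  obtain rfl : Vs = fieldS t H := funext hVs
  obtain rfl : VH = fieldH := funext hVH
  obtain rfl : f = spectralFun t H := funext hf
  intro x hq hp hx
  simpa [hx, lieBracket, Prod.mk_zero_zero] using stmt10_general t H hq hp
end

section
/- Fix ε ∈ ℂ∖{0} and α, s ∈ ℂ, let U ⊆ ℂ be open and let q, p, r : U → ℂ be differentiable with p nonvanishing on U. Suppose that on U: q′ = r + p/ε, p′ = q²/(2p) + (1/ε + r/p)·(2q³ + tq − α), and r′ = −(1/ε)·(s + q²/(2p) + (r/p)·(2q³ + tq − α)). Then q is twice differentiable on U and satisfies ε²·q″ = 2q³ + qt − (α + εs). -/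
/-!
The velocity of `q` is split as `r + ε⁻¹ p`. In both `p′ = g + ε⁻¹ f` and `r′ = -ε⁻¹ (s + g)` the
same term `g` occurs, with weights that cancel in `r′ + ε⁻¹ p′`, so `ε² q″ = f - ε s` whatever
`g` is. For Painlevé II, `f = 2q³ + qt - α` and `g = q²/(2p) + (r/p) f`.
-/

open scoped Topology

theorem sq_smul_neg_inv_smul_add_inv_smul {K M : Type*} [Field K] [AddCommGroup M] [Module K M]
    {ε : K} (hε : ε ≠ 0) (f g s : M) :
    ε ^ 2 • (-ε⁻¹ • (s + g) + ε⁻¹ • (g + ε⁻¹ • f)) = f - ε • s := by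
  match_scalars <;> field_simp
  ring

section SplitVelocity

variable {𝕜 E : Type*} [NontriviallyNormedField 𝕜] [NormedAddCommGroup E] [NormedSpace 𝕜 E]

theorem hasDerivAt_deriv_of_eventually_hasDerivAt {q v : 𝕜 → E} {a : E} {t : 𝕜}
    (hq : ∀ᶠ x in 𝓝 t, HasDerivAt q (v x) x) (hv : HasDerivAt v a t) :
    HasDerivAt (deriv q) a t :=
  hv.congr_of_eventuallyEq (hq.mono fun _ hx => hx.deriv)

theorem stmt13_general {ε : 𝕜} (hε : ε ≠ 0) (s : E) {U : Set 𝕜} (hU : IsOpen U)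
    {q p r f g : 𝕜 → E}
    (hq : ∀ t ∈ U, HasDerivAt q (r t + ε⁻¹ • p t) t)
    (hp : ∀ t ∈ U, HasDerivAt p (g t + ε⁻¹ • f t) t)
    (hr : ∀ t ∈ U, HasDerivAt r (-ε⁻¹ • (s + g t)) t) :
    ∀ t ∈ U, DifferentiableAt 𝕜 (deriv q) t ∧
      ε ^ 2 • deriv (deriv q) t = f t - ε • s := by
  intro t ht
  have hq'' : HasDerivAt (deriv q) (-ε⁻¹ • (s + g t) + ε⁻¹ • (g t + ε⁻¹ • f t)) t :=
    hasDerivAt_deriv_of_eventually_hasDerivAt (Filter.eventually_of_mem (hU.mem_nhds ht) hq)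
      ((hr t ht).add ((hp t ht).const_smul ε⁻¹))
  refine ⟨hq''.differentiableAt, ?_⟩
  rw [hq''.deriv, sq_smul_neg_inv_smul_add_inv_smul hε]

end SplitVelocity

/- Painlevé II: along the isomonodromy flow w₁, q solves the ε-deformed
   Painlevé II equation ε²q″ = 2q³ + qt − (α + εs). -/
theorem stmt13
    (ε : ℂ) (hε : ε ≠ 0) (α s : ℂ)
    (U : Set ℂ) (hU : IsOpen U)
    (q p r : ℂ → ℂ)
    (hq : ∀ t ∈ U, DifferentiableAt ℂ q t)
    (hp : ∀ t ∈ U, DifferentiableAt ℂ p t)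
    (hr : ∀ t ∈ U, DifferentiableAt ℂ r t)
    (hpne : ∀ t ∈ U, p t ≠ 0)
    (h1 : ∀ t ∈ U, deriv q t = r t + p t / ε)
    (h2 : ∀ t ∈ U, deriv p t = (q t) ^ 2 / (2 * p t)
      + (1 / ε + r t / p t) * (2 * (q t) ^ 3 + t * q t - α))
    (h3 : ∀ t ∈ U, deriv r t = -(1 / ε) * (s + (q t) ^ 2 / (2 * p t)
      + (r t / p t) * (2 * (q t) ^ 3 + t * q t - α))) :
    ∀ t ∈ U, DifferentiableAt ℂ (deriv q) t ∧
      ε ^ 2 * deriv (deriv q) t = 2 * (q t) ^ 3 + q t * t - (α + ε * s) := by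
  let f : ℂ → ℂ := fun t => 2 * q t ^ 3 + q t * t - α
  let g : ℂ → ℂ := fun t => q t ^ 2 / (2 * p t) + r t / p t * f t
  have hq' : ∀ t ∈ U, HasDerivAt q (r t + ε⁻¹ • p t) t := fun t ht =>
    (hq t ht).hasDerivAt.congr_deriv (by rw [h1 t ht, smul_eq_mul]; ring)
  have hp' : ∀ t ∈ U, HasDerivAt p (g t + ε⁻¹ • f t) t := fun t ht =>
    (hp t ht).hasDerivAt.congr_deriv (by simp only [h2 t ht, smul_eq_mul, f, g]; ring)
  have hr' : ∀ t ∈ U, HasDerivAt r (-ε⁻¹ • (s + g t)) t := fun t ht =>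
    (hr t ht).hasDerivAt.congr_deriv (by simp only [h3 t ht, smul_eq_mul, f, g]; ring)
  simpa only [f, smul_eq_mul, sub_sub] using stmt13_general hε s hU hq' hp' hr'
end

section
/- Fix t, α ∈ ℂ. On Ω = {(q, p, r, s) ∈ ℂ⁴ : p ≠ 0} define the vector fields V_t(q,p,r,s) = (p, 2q³ + tq − α, −((r/p)(2q³ + tq − α) + s + q²/(2p)), 0), V_H(q,p,r,s) = (0, 0, −1/p, 0), and V_α(q,p,r,s) = (0, 0, q/p, −1). Then: (a) the three Lie brackets [V_t, V_H], [V_t, V_α], [V_H, V_α], defined by [F,G](x) = (DG)_x·F(x) − (DF)_x·G(x), vanish identically on Ω; and (b) V_t is tangent to every level set of the function p² − (q⁴ + tq² − 2αq), i.e. the directional derivative of p² − q⁴ − tq² + 2αq along V_t vanishes identically on Ω. -/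
/-!
Write `g = 2 q ^ 3 + t q - α`. Since `2 g` is the `q`-derivative of `q ^ 4 + t q ^ 2 - 2 α q`, the
difference of `p ^ 2` and this quartic is constant along `p ∂_q + g ∂_p`.

Both `V_H` and `V_α` have the form `(0, 0, n(q) / p, c)` with `c` constant. Their coefficients do
not depend on the fibre coordinates `(r, s)`, hence they commute with each other. In the bracket of
`V_t` with such a field the two terms `n(q) g(q) / p ^ 2` cancel and only `n'(q) + c` is left,
which vanishes for `(n, c) = (-1, 0)` and for `(n, c) = (q, -1)`.
-/

open VectorField

section

variable {𝕜 : Type*} [NontriviallyNormedField 𝕜]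

/-- The field `V_t` with an arbitrary force `g` in place of `2 q ^ 3 + t q - α` and an arbitrary
inhomogeneity `b` in place of `q ^ 2 / 2`. A point is `x = (q, p, r, s)`. -/
def spectralFlow (g b : 𝕜 → 𝕜) (x : 𝕜 × 𝕜 × 𝕜 × 𝕜) : 𝕜 × 𝕜 × 𝕜 × 𝕜 :=
  (x.2.1, g x.1, -((x.2.2.1 / x.2.1) * g x.1 + x.2.2.2 + b x.1 / x.2.1), 0)

/-- The vector field `(0, 0, n(q) / p, c)`, tangent to the fibres of `(q, p, r, s) ↦ (q, p)`.
It is `V_H` for `n = -1`, `c = 0`, and `V_α` for `n = id`, `c = -1`. -/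
def fibreField (n : 𝕜 → 𝕜) (c : 𝕜) (x : 𝕜 × 𝕜 × 𝕜 × 𝕜) : 𝕜 × 𝕜 × 𝕜 × 𝕜 :=
  (0, 0, n x.1 / x.2.1, c)

variable {g b n m F : 𝕜 → 𝕜} {n' c d : 𝕜} {x : 𝕜 × 𝕜 × 𝕜 × 𝕜}

lemma differentiableAt_spectralFlow (hp : x.2.1 ≠ 0) (hg : DifferentiableAt 𝕜 g x.1)
    (hb : DifferentiableAt 𝕜 b x.1) : DifferentiableAt 𝕜 (spectralFlow g b) x := by
  unfold spectralFlow
  fun_prop (disch := assumption)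

lemma spectralFlow_add_smul_fibre (g b : 𝕜 → 𝕜) (x : 𝕜 × 𝕜 × 𝕜 × 𝕜) (ρ σ τ : 𝕜) :
    spectralFlow g b (x + τ • (0, 0, ρ, σ)) =
      spectralFlow g b x + τ • (0, 0, -(ρ / x.2.1 * g x.1 + σ), 0) := by
  simp only [spectralFlow, Prod.smul_mk, smul_eq_mul, mul_zero, Prod.snd_add, Prod.fst_add,
    add_zero, Prod.mk_add_mk, Prod.mk.injEq, true_and, and_true]
  ring

lemma fderiv_spectralFlow_apply_fibre (hp : x.2.1 ≠ 0) (hg : DifferentiableAt 𝕜 g x.1)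
    (hb : DifferentiableAt 𝕜 b x.1) (ρ σ : 𝕜) :
    fderiv 𝕜 (spectralFlow g b) x (0, 0, ρ, σ) = (0, 0, -(ρ / x.2.1 * g x.1 + σ), 0) := by
  rw [← (differentiableAt_spectralFlow hp hg hb).lineDeriv_eq_fderiv]
  refine HasLineDerivAt.lineDeriv ?_
  simp only [HasLineDerivAt, spectralFlow_add_smul_fibre]
  simpa only [one_smul] using ((hasDerivAt_id' (0 : 𝕜)).smul_const _).const_add _

lemma fderiv_fibreField_apply (hp : x.2.1 ≠ 0) (hn : HasDerivAt n n' x.1)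
    (v : 𝕜 × 𝕜 × 𝕜 × 𝕜) :
    fderiv 𝕜 (fibreField n c) x v =
      (0, 0, (n' * v.1 * x.2.1 - n x.1 * v.2.1) / x.2.1 ^ 2, 0) := by
  have hnum := hn.comp_hasFDerivAt x (hasFDerivAt_fst (𝕜 := 𝕜) (p := x))
  have hinv := (hasDerivAt_inv hp).comp_hasFDerivAt x (hasFDerivAt_snd (𝕜 := 𝕜) (p := x)).fst
  have hfield : HasFDerivAt (fibreField n c) _ x :=
    ((hasFDerivAt_const 0 x).prodMk <| (hasFDerivAt_const 0 x).prodMk <|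
      (hnum.fun_mul hinv).prodMk (hasFDerivAt_const c x)).congr_of_eventuallyEq <|
        .of_forall fun y ↦ by simp [fibreField, div_eq_mul_inv]
  rw [hfield.fderiv]
  simp only [Function.comp_apply, ContinuousLinearMap.prod_apply, zero_apply, add_apply, smul_apply,
    ContinuousLinearMap.comp_apply, ContinuousLinearMap.coe_snd', ContinuousLinearMap.coe_fst',
    smul_eq_mul, Prod.mk.injEq, true_and, and_true]
  field_simp
  ring

theorem lieBracket_fibreField_fibreField (hp : x.2.1 ≠ 0) (hn : DifferentiableAt 𝕜 n x.1)
    (hm : DifferentiableAt 𝕜 m x.1) :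
    lieBracket 𝕜 (fibreField n c) (fibreField m d) x = 0 := by
  rw [lieBracket, fderiv_fibreField_apply hp hm.hasDerivAt,
    fderiv_fibreField_apply hp hn.hasDerivAt]
  simp [fibreField]

theorem lieBracket_spectralFlow_fibreField (hp : x.2.1 ≠ 0) (hg : DifferentiableAt 𝕜 g x.1)
    (hb : DifferentiableAt 𝕜 b x.1) (hn : HasDerivAt n n' x.1) :
    lieBracket 𝕜 (spectralFlow g b) (fibreField n c) x = (0, 0, n' + c, 0) := by
  rw [lieBracket, fderiv_fibreField_apply hp hn, fibreField,
    fderiv_spectralFlow_apply_fibre hp hg hb]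
  have hcancel : (n' * x.2.1 * x.2.1 - n x.1 * g x.1) / x.2.1 ^ 2
      - -(n x.1 / x.2.1 / x.2.1 * g x.1 + c) = n' + c := by
    field_simp
    ring
  simp only [spectralFlow, Prod.mk_sub_mk, sub_zero, hcancel]

theorem fderiv_sq_sub_apply_spectralFlow (hF : HasDerivAt F (2 * g x.1) x.1) :
    fderiv 𝕜 (fun y : 𝕜 × 𝕜 × 𝕜 × 𝕜 ↦ y.2.1 ^ 2 - F y.1) x (spectralFlow g b x) = 0 := by
  have hpF := ((hasFDerivAt_snd (𝕜 := 𝕜) (p := x)).fst.pow 2).fun_sub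
    (hF.comp_hasFDerivAt x (hasFDerivAt_fst (𝕜 := 𝕜) (p := x)))
  calc
    _ = 2 * x.2.1 * g x.1 - 2 * g x.1 * x.2.1 :=
      (congrArg (· (spectralFlow g b x)) hpF.fderiv).trans (by simp [spectralFlow])
    _ = 0 := by ring

theorem stmt15_general (hp : x.2.1 ≠ 0) (hg : DifferentiableAt 𝕜 g x.1)
    (hb : DifferentiableAt 𝕜 b x.1) (hF : HasDerivAt F (2 * g x.1) x.1) :
    (lieBracket 𝕜 (spectralFlow g b) (fibreField (fun _ ↦ -1) 0) x = 0 ∧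
      lieBracket 𝕜 (spectralFlow g b) (fibreField id (-1)) x = 0 ∧
      lieBracket 𝕜 (fibreField (fun _ ↦ -1) 0) (fibreField id (-1)) x = 0) ∧
      fderiv 𝕜 (fun y : 𝕜 × 𝕜 × 𝕜 × 𝕜 ↦ y.2.1 ^ 2 - F y.1) x (spectralFlow g b x) = 0 := by
  refine ⟨⟨?_, ?_, ?_⟩, fderiv_sq_sub_apply_spectralFlow hF⟩
  · simp [lieBracket_spectralFlow_fibreField hp hg hb (hasDerivAt_const x.1 (-1))]
  · simp [lieBracket_spectralFlow_fibreField hp hg hb (hasDerivAt_id x.1)]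
  · exact lieBracket_fibreField_fibreField hp (differentiableAt_const _) differentiableAt_id

lemma hasDerivAt_painleveTwo_quartic (t α q : 𝕜) :
    HasDerivAt (fun z ↦ z ^ 4 + t * z ^ 2 - 2 * α * z) (2 * (2 * q ^ 3 + t * q - α)) q := by
  refine ((((hasDerivAt_id q).fun_pow 4).fun_add
    (((hasDerivAt_id q).fun_pow 2).const_mul t)).fun_sub
    ((hasDerivAt_id q).const_mul (2 * α))).congr_deriv ?_
  simp only [id]
  push_cast
  ring

end

theorem stmt15 (t α : ℂ)
    (Vt VH Vα : ℂ × ℂ × ℂ × ℂ → ℂ × ℂ × ℂ × ℂ)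
    (hVt : ∀ x : ℂ × ℂ × ℂ × ℂ, Vt x =
      (x.2.1,
       2 * x.1 ^ 3 + t * x.1 - α,
       -((x.2.2.1 / x.2.1) * (2 * x.1 ^ 3 + t * x.1 - α) + x.2.2.2
         + x.1 ^ 2 / (2 * x.2.1)),
       0))
    (hVH : ∀ x : ℂ × ℂ × ℂ × ℂ, VH x = (0, 0, -1 / x.2.1, 0))
    (hVα : ∀ x : ℂ × ℂ × ℂ × ℂ, Vα x = (0, 0, x.1 / x.2.1, -1))
    (f : ℂ × ℂ × ℂ × ℂ → ℂ)
    (hf : ∀ x : ℂ × ℂ × ℂ × ℂ,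
      f x = x.2.1 ^ 2 - x.1 ^ 4 - t * x.1 ^ 2 + 2 * α * x.1) :
    ∀ x : ℂ × ℂ × ℂ × ℂ, x.2.1 ≠ 0 →
      (fderiv ℂ VH x (Vt x) - fderiv ℂ Vt x (VH x) = 0 ∧
       fderiv ℂ Vα x (Vt x) - fderiv ℂ Vt x (Vα x) = 0 ∧
       fderiv ℂ Vα x (VH x) - fderiv ℂ VH x (Vα x) = 0) ∧
      fderiv ℂ f x (Vt x) = 0 := by
  intro x hp
  obtain rfl : Vt = spectralFlow (fun q ↦ 2 * q ^ 3 + t * q - α) (fun q ↦ q ^ 2 / 2) :=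
    funext fun y ↦ by rw [hVt, spectralFlow, div_div]
  obtain rfl : VH = fibreField (fun _ ↦ -1) 0 := funext hVH
  obtain rfl : Vα = fibreField id (-1) := funext hVα
  obtain rfl : f = fun y ↦ y.2.1 ^ 2 - (y.1 ^ 4 + t * y.1 ^ 2 - 2 * α * y.1) :=
    funext fun y ↦ by rw [hf]; ring
  exact stmt15_general (F := fun q ↦ q ^ 4 + t * q ^ 2 - 2 * α * q) hp (by fun_prop) (by fun_prop)
    (hasDerivAt_painleveTwo_quartic t α x.1)
end
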